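/- arXiv:1201.1280 — 2 statements merged into one kernel-verified Lean document; each statement's English description precedes it below -/
import Mathlib

section
/- Let p be a prime, δ an element of a compact subgroup of PGL₂(ℚ_p), and suppose no power of δ is upper triangular. Define k_{pⁿ}(δ) as the minimal positive integer k such that δ^k lies in the compact open subgroup a(pⁿ) K_p a(pⁿ)⁻¹, where a(pⁿ) = diag(1, pⁿ) and K_p = PGL₂(ℤ_p). Then the sequence k_{pⁿ}(δ)/pⁿ takes only finitely many values, and moreover it is eventually constant as n → ∞. -/
/-- `PGL₂(R) = GL₂(R)` modulo its center. -/
abbrev PGL2 (R : Type*) [CommRing R] :=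
  GL (Fin 2) R ⧸ Subgroup.center (GL (Fin 2) R)

/-- The projection `GL₂(R) → PGL₂(R)`. -/
def toPGL2 (R : Type*) [CommRing R] : GL (Fin 2) R →* PGL2 R :=
  QuotientGroup.mk' _

/-- `K_p = PGL₂(ℤ_p)`, the image in `PGL₂(ℚ_p)` of the integral matrices. -/
noncomputable def Kp (p : ℕ) [Fact p.Prime] : Subgroup (PGL2 ℚ_[p]) :=
  ((toPGL2 ℚ_[p]).comp (Matrix.GeneralLinearGroup.map (PadicInt.Coe.ringHom))).range

/-- The element `a(pⁿ) = diag(1, pⁿ)` of `PGL₂(ℚ_p)`. -/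
noncomputable def aPGL (p : ℕ) [Fact p.Prime] (n : ℕ) : PGL2 ℚ_[p] :=
  toPGL2 ℚ_[p] <| Matrix.GeneralLinearGroup.mkOfDetNeZero
    (Matrix.diagonal ![1, (p : ℚ_[p]) ^ n]) (by
      have hp : (p : ℚ_[p]) ≠ 0 := by
        exact_mod_cast (Nat.cast_ne_zero (R := ℚ_[p])).mpr (Fact.out (p := p.Prime)).pos.ne'
      simp [Matrix.det_diagonal, Fin.prod_univ_two, pow_ne_zero, hp])

/-!
The integer `k_{pⁿ}(δ)` is the period of `δ` at the vertex `vₙ = a(pⁿ) K_p` of the Bruhat–Tits tree.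
By compactness some power `δ ^ m`, `m > 0`, is the image of a matrix `U ≡ 1 mod p ^ 2` in
`GL₂(ℤ_p)`. Up to units the lower left entry of `U ^ k` is `k` times that of `U`, which is nonzero,
say of valuation `v`; hence `δ ^ m` has period `p ^ (n - v)` at `vₙ` for `n ≥ v`, and
`k_{pⁿ}(δ) / pⁿ = gcd (k_{pⁿ}(δ), m) / p ^ v`. A compact subgroup has bounded upper right entries
(relative to the determinant), so for large `n` its elements fixing `vₙ₊₁` also fix `vₙ`. Thus
`k_{pⁿ}(δ)` divides `k_{pⁿ⁺¹}(δ)`, and the gcd, a divisor of `m`, is eventually constant.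
-/

open Filter Topology Matrix MulAction

section Periods

theorem smul_mk_eq_mk_iff {G : Type*} [Group G] {H : Subgroup G} {g a : G} :
    g • (a : G ⧸ H) = a ↔ a⁻¹ * g * a ∈ H := by
  rw [eq_comm, MulAction.Quotient.smul_coe, smul_eq_mul, QuotientGroup.eq, mul_assoc]

theorem period_eq_sInf {M α : Type*} [Monoid M] [MulAction M α] (g : M) (x : α) :
    period g x = sInf {k : ℕ | 0 < k ∧ g ^ k • x = x} := by
  simp only [pow_smul_eq_iff_period_dvd]
  refine le_antisymm ?_ ?_
  · rcases Set.eq_empty_or_nonempty {k : ℕ | 0 < k ∧ period g x ∣ k} with hempty | hne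
    · rw [hempty, Nat.sInf_empty]
      by_contra! hpos
      exact hempty.subset ⟨hpos, dvd_rfl⟩
    · exact le_csInf hne fun k hk => Nat.le_of_dvd hk.1 hk.2
  · rcases Nat.eq_zero_or_pos (period g x) with h0 | hpos
    · simp +contextual [h0, Nat.pos_iff_ne_zero]
    · exact Nat.sInf_le ⟨hpos, dvd_rfl⟩

theorem gcd_period_mul_period_pow {M α : Type*} [Monoid M] [MulAction M α] (g : M) (x : α)
    (m : ℕ) : (period g x).gcd m * period (g ^ m) x = period g x := by
  rcases eq_or_ne m 0 with rfl | hm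
  · simp
  have hpow : period (g ^ m) x = period g x / (period g x).gcd m := by
    simp only [period_eq_minimalPeriod, ← Function.minimalPeriod_iterate_eq_div_gcd hm,
      smul_iterate]
  rw [hpow, Nat.mul_div_cancel' (Nat.gcd_dvd_left _ _)]

theorem eventuallyConst_of_eventually_dvd_succ {d : ℕ → ℕ} {m : ℕ} (hm : 0 < m)
    (hdm : ∀ n, d n ∣ m) (hd : ∀ᶠ n in atTop, d n ∣ d (n + 1)) : EventuallyConst d atTop := by
  obtain ⟨B, hB⟩ := eventually_atTop.1 hd
  have hmono : Monotone fun n => d (B + n) := monotone_nat_of_le_succ fun n =>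
    Nat.le_of_dvd (Nat.pos_of_dvd_of_pos (hdm _) hm) (hB _ (Nat.le_add_right _ _))
  obtain ⟨b, N, hN⟩ := converges_of_monotone_of_bounded hmono fun n => Nat.le_of_dvd hm (hdm _)
  refine eventuallyConst_iff_exists_eventuallyEq.2 ⟨b, eventually_atTop.2 ⟨B + N, fun n hn => ?_⟩⟩
  obtain ⟨e, rfl⟩ := Nat.exists_eq_add_of_le hn
  rw [add_assoc]
  exact hN _ (Nat.le_add_right _ _)

theorem eventuallyConst_period_div_pow {M α : Type*} [Monoid M] [MulAction M α] {g : M} {x : ℕ → α}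
    {m q v : ℕ} (hm : 0 < m) (hq : 0 < q) (hpow : ∀ n ≥ v, period (g ^ m) (x n) = q ^ (n - v))
    (hfix : ∀ᶠ n in atTop, ∀ k : ℕ, g ^ k • x (n + 1) = x (n + 1) → g ^ k • x n = x n) :
    EventuallyConst (fun n => (period g (x n) : ℚ) / (q : ℚ) ^ n) atTop := by
  have hgcd : EventuallyConst (fun n => (period g (x n)).gcd m) atTop := by
    refine eventuallyConst_of_eventually_dvd_succ hm (fun n => Nat.gcd_dvd_right _ _) ?_
    filter_upwards [hfix] with n hn
    exact Nat.gcd_dvd_gcd_of_dvd_left m (pow_smul_eq_iff_period_dvd.1 (hn _ (pow_period_smul g _)))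
  refine (hgcd.comp fun d : ℕ => (d : ℚ) / (q : ℚ) ^ v).congr ?_
  filter_upwards [eventually_ge_atTop v] with n hn
  have hq0 : (q : ℚ) ≠ 0 := by exact_mod_cast hq.ne'
  have hperiod : (period g (x n) : ℚ) = (period g (x n)).gcd m * (q : ℚ) ^ (n - v) := by
    exact_mod_cast hpow n hn ▸ (gcd_period_mul_period_pow g (x n) m).symm
  rw [Function.comp_apply, div_eq_div_iff (pow_ne_zero _ hq0) (pow_ne_zero _ hq0), hperiod,
    mul_assoc, ← pow_add, Nat.sub_add_cancel hn]

theorem finite_range_of_eventuallyConst {α : Type*} {f : ℕ → α} (hf : EventuallyConst f atTop) :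
    (Set.range f).Finite := by
  obtain ⟨N, hN⟩ := eventuallyConst_atTop.1 hf
  refine ((Set.finite_Iic N).image f).subset ?_
  rintro _ ⟨n, rfl⟩
  rcases le_total n N with hn | hn
  · exact ⟨n, hn, rfl⟩
  · exact ⟨N, le_refl N, (hN n hn).symm⟩

end Periods

section CongruenceKernel

variable {R S : Type*} [CommRing R] [CommRing S] {φ : R →+* S}

theorem map_apply_of_mem_ker {n : Type*} [Fintype n] [DecidableEq n] {U : GL n R}
    (hU : U ∈ (GeneralLinearGroup.map φ).ker) (i j : n) : φ (U i j) = (1 : Matrix n n S) i j := by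
  rw [← GeneralLinearGroup.map_apply, MonoidHom.mem_ker.1 hU, Units.val_one]

theorem exists_pow_apply_one_zero_eq_mul {U : GL (Fin 2) R}
    (hU : U ∈ (GeneralLinearGroup.map φ).ker) (k : ℕ) : ∃ a, (U ^ k) 1 0 = U 1 0 * a ∧ φ a = k := by
  induction k with
  | zero => exact ⟨0, by simp, by simp⟩
  | succ k ih =>
    obtain ⟨a, ha, hφa⟩ := ih
    refine ⟨a * U 0 0 + (U ^ k) 1 1, ?_, ?_⟩
    · rw [pow_succ, Units.val_mul, mul_apply, Fin.sum_univ_two, ha]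
      ring
    · have h00 := map_apply_of_mem_ker hU 0 0
      have h11 := map_apply_of_mem_ker (pow_mem hU k) 1 1
      rw [map_add, map_mul, hφa, h00, h11]
      simp

end CongruenceKernel

section ProjectiveLinearGroup

theorem val_scalar_mul {n R : Type*} [Fintype n] [DecidableEq n] [CommRing R] (c : Rˣ)
    (A : GL n R) : (GeneralLinearGroup.scalar n c * A).val = (c : R) • A.val := by
  rw [Units.val_mul, GeneralLinearGroup.coe_scalar, scalar_apply, ← smul_eq_diagonal_mul]

theorem toPGL2_eq_toPGL2_iff {R : Type*} [CommRing R] {A B : GL (Fin 2) R} :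
    toPGL2 R A = toPGL2 R B ↔ ∃ c : Rˣ, B = GeneralLinearGroup.scalar (Fin 2) c * A := by
  simp only [toPGL2, QuotientGroup.mk'_eq_mk', GeneralLinearGroup.center_eq_range_scalar,
    MonoidHom.mem_range, exists_exists_eq_and, GeneralLinearGroup.scalar_commute]
  simp only [eq_comm]

theorem exists_norm_apply_sq_le_mul_norm_det {K : Type*} [NormedField K] {S : Set (PGL2 K)}
    (hS : IsCompact S) (i j : Fin 2) :
    ∃ C : ℝ, ∀ M : GL (Fin 2) K, toPGL2 K M ∈ S → ‖M i j‖ ^ 2 ≤ C * ‖M.val.det‖ := by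
  let φ : GL (Fin 2) K → ℝ := fun M => ‖M i j‖ ^ 2 / ‖M.val.det‖
  have hdet : ∀ M : GL (Fin 2) K, 0 < ‖M.val.det‖ := fun M =>
    norm_pos_iff.2 (GeneralLinearGroup.det_ne_zero M)
  have hφ : Continuous φ :=
    ((Units.continuous_val.matrix_elem i j).norm.pow 2).div₀
      Units.continuous_val.matrix_det.norm fun M => (hdet M).ne'
  have hφ_eq : ∀ A B : GL (Fin 2) K, toPGL2 K A = toPGL2 K B → φ A = φ B := by
    intro A B hAB
    obtain ⟨c, rfl⟩ := toPGL2_eq_toPGL2_iff.1 hAB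
    have hc : ‖(c : K)‖ ≠ 0 := norm_ne_zero_iff.2 c.ne_zero
    have hA := (hdet A).ne'
    simp only [φ, val_scalar_mul, det_smul, Matrix.smul_apply, smul_eq_mul, norm_mul, norm_pow,
      Fintype.card_fin]
    field_simp
  let ψ : PGL2 K → ℝ := Quotient.lift φ fun A B h => hφ_eq A B (Quotient.sound h)
  have hψ : Continuous ψ := hφ.quotient_lift _
  obtain ⟨C, hC⟩ := (hS.image hψ).bddAbove
  exact ⟨C, fun M hM => (div_le_iff₀ (hdet M)).1 (hC ⟨_, hM, rfl⟩)⟩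

end ProjectiveLinearGroup

theorem exists_pow_mem_of_mem_nhds_one {G : Type*} [Group G] [TopologicalSpace G]
    [IsTopologicalGroup G] {K : Subgroup G} (hK : IsCompact (K : Set G)) {g : G} (hg : g ∈ K)
    {U : Set G} (hU : U ∈ 𝓝 1) : ∃ m : ℕ, 0 < m ∧ g ^ m ∈ U := by
  have : CompactSpace K := isCompact_iff_compactSpace.1 hK
  have hcluster := mapClusterPt_one_atTop_pow (⟨g, hg⟩ : K)
  have hUK : ((↑) : K → G) ⁻¹' U ∈ 𝓝 (1 : K) := continuous_subtype_val.continuousAt hU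
  obtain ⟨m, hmU, hm⟩ :=
    ((hcluster.frequently hUK).and_eventually (eventually_gt_atTop 0)).exists
  exact ⟨m, hm, hmU⟩

section PadicVertices

variable {p : ℕ} [Fact p.Prime]

theorem mem_range_map_coe_iff {n : Type*} [Fintype n] [DecidableEq n] {M : GL n ℚ_[p]} :
    M ∈ (GeneralLinearGroup.map (n := n) (PadicInt.Coe.ringHom (p := p))).range ↔
      ‖M.val.det‖ = 1 ∧ ∀ i j, ‖M i j‖ ≤ 1 := by
  constructor
  · rintro ⟨U, rfl⟩
    refine ⟨?_, fun i j => PadicInt.norm_le_one (U i j)⟩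
    have hdet := GeneralLinearGroup.map_det (PadicInt.Coe.ringHom (p := p)) U
    have hval := congrArg Units.val hdet
    rw [GeneralLinearGroup.val_det_apply] at hval
    rw [hval]
    exact PadicInt.norm_units (GeneralLinearGroup.det U)
  · rintro ⟨hdet, hM⟩
    let X : Matrix n n ℤ_[p] := Matrix.of fun i j => ⟨M i j, hM i j⟩
    have hX : (X.det : ℚ_[p]) = M.val.det := PadicInt.Coe.ringHom.map_det X
    have hunit : IsUnit X.det := by rw [PadicInt.isUnit_iff, PadicInt.norm_def, hX, hdet]
    exact ⟨GeneralLinearGroup.mk'' X hunit, GeneralLinearGroup.ext fun i j => rfl⟩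

theorem toPGL2_mem_Kp_iff {M : GL (Fin 2) ℚ_[p]} :
    toPGL2 ℚ_[p] M ∈ Kp p ↔
      ∃ c : ℚ_[p]ˣ, ‖M.val.det‖ = ‖(c : ℚ_[p])‖ ^ 2 ∧ ∀ i j, ‖M i j‖ ≤ ‖(c : ℚ_[p])‖ := by
  have hmem : toPGL2 ℚ_[p] M ∈ Kp p ↔ ∃ c : ℚ_[p]ˣ, GeneralLinearGroup.scalar (Fin 2) c⁻¹ * M ∈
      (GeneralLinearGroup.map (PadicInt.Coe.ringHom (p := p))).range := by
    simp only [Kp, MonoidHom.mem_range, MonoidHom.comp_apply, toPGL2_eq_toPGL2_iff, map_inv,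
      eq_inv_mul_iff_mul_eq]
    rw [exists_comm]
    simp only [eq_comm]
  rw [hmem]
  refine exists_congr fun c => ?_
  have hc : 0 < ‖(c : ℚ_[p])‖ := norm_pos_iff.2 c.ne_zero
  simp only [mem_range_map_coe_iff, val_scalar_mul, Units.val_inv_eq_inv_val, det_smul,
    Matrix.smul_apply, smul_eq_mul, norm_mul, norm_pow, norm_inv, Fintype.card_fin, inv_pow,
    inv_mul_le_one₀ hc, inv_mul_eq_one₀ (pow_pos hc 2).ne', eq_comm]

theorem exists_toPGL2_eq_conj_aPGL (n : ℕ) (M : GL (Fin 2) ℚ_[p]) :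
    ∃ N : GL (Fin 2) ℚ_[p], (aPGL p n)⁻¹ * toPGL2 ℚ_[p] M * aPGL p n = toPGL2 ℚ_[p] N ∧
      N.val.det = M.val.det ∧
      N.val = !![M 0 0, M 0 1 * (p : ℚ_[p]) ^ n; ((p : ℚ_[p]) ^ n)⁻¹ * M 1 0, M 1 1] := by
  have hpn : (p : ℚ_[p]) ^ n ≠ 0 := pow_ne_zero n (NeZero.ne _)
  have hdet : (diagonal ![1, (p : ℚ_[p]) ^ n]).det ≠ 0 := by
    simpa [det_diagonal, Fin.prod_univ_two] using hpn
  let A := GeneralLinearGroup.mkOfDetNeZero (diagonal ![1, (p : ℚ_[p]) ^ n]) hdet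
  have hAinv : (A⁻¹).val = diagonal ![1, ((p : ℚ_[p]) ^ n)⁻¹] := by
    rw [GeneralLinearGroup.coe_inv]
    refine inv_eq_right_inv ?_
    change diagonal ![1, (p : ℚ_[p]) ^ n] * _ = 1
    rw [diagonal_mul_diagonal, ← diagonal_one]
    congr 1
    ext i
    fin_cases i <;> simp [hpn]
  refine ⟨A⁻¹ * M * A, ?_, ?_, ?_⟩
  · rw [map_mul, map_mul, map_inv]
    rfl
  · exact det_units_conj' A M.val
  · rw [Units.val_mul, Units.val_mul, hAinv]
    change diagonal _ * M.val * diagonal ![1, (p : ℚ_[p]) ^ n] = _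
    ext i j
    rw [mul_diagonal, diagonal_mul]
    fin_cases i <;> fin_cases j <;> simp [hpn, mul_comm]

/-- The vertex `a(pⁿ) K_p` of the Bruhat–Tits tree of `PGL₂(ℚ_p)`, the vertices being encoded as
cosets of `K_p`; `k_{pⁿ}(δ)` is the period of `δ` at this vertex. -/
noncomputable def vertex (p : ℕ) [Fact p.Prime] (n : ℕ) : PGL2 ℚ_[p] ⧸ Kp p :=
  (aPGL p n : PGL2 ℚ_[p] ⧸ Kp p)

theorem toPGL2_smul_vertex_eq_iff {n : ℕ} {M : GL (Fin 2) ℚ_[p]} :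
    toPGL2 ℚ_[p] M • vertex p n = vertex p n ↔
      ∃ c : ℚ_[p]ˣ, ‖M.val.det‖ = ‖(c : ℚ_[p])‖ ^ 2 ∧
        (‖M 0 0‖ ≤ ‖(c : ℚ_[p])‖ ∧ ‖M 0 1‖ ≤ p ^ n * ‖(c : ℚ_[p])‖) ∧
        p ^ n * ‖M 1 0‖ ≤ ‖(c : ℚ_[p])‖ ∧ ‖M 1 1‖ ≤ ‖(c : ℚ_[p])‖ := by
  have hpn : (0 : ℝ) < (p : ℝ) ^ n := pow_pos (Nat.cast_pos.2 (Fact.out : p.Prime).pos) n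
  obtain ⟨N, hconj, hdet, hN⟩ := exists_toPGL2_eq_conj_aPGL n M
  rw [vertex, smul_mk_eq_mk_iff, hconj, toPGL2_mem_Kp_iff, hdet, hN]
  simp only [Fin.forall_fin_two]
  simp [inv_mul_le_iff₀ hpn, mul_comm]

/-- The homomorphism `GL₂(ℤ_p) → PGL₂(ℚ_p)`, whose range is `K_p`. -/
noncomputable def integralToPGL2 (p : ℕ) [Fact p.Prime] : GL (Fin 2) ℤ_[p] →* PGL2 ℚ_[p] :=
  (toPGL2 ℚ_[p]).comp (GeneralLinearGroup.map PadicInt.Coe.ringHom)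

theorem integralToPGL2_smul_vertex_eq_iff {n : ℕ} {U : GL (Fin 2) ℤ_[p]} :
    integralToPGL2 p U • vertex p n = vertex p n ↔ (p : ℤ_[p]) ^ n ∣ U 1 0 := by
  have hp1 : (1 : ℝ) ≤ (p : ℝ) ^ n := one_le_pow₀ (Nat.one_le_cast.2 (Fact.out : p.Prime).one_le)
  obtain ⟨hdet, hle⟩ := mem_range_map_coe_iff.1
    (MonoidHom.mem_range.2 ⟨U, rfl⟩ : GeneralLinearGroup.map PadicInt.Coe.ringHom U ∈ _)
  have hdvd : (p : ℤ_[p]) ^ n ∣ U 1 0 ↔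
      p ^ n * ‖GeneralLinearGroup.map (PadicInt.Coe.ringHom (p := p)) U 1 0‖ ≤ 1 := by
    rw [← Ideal.mem_span_singleton, ← PadicInt.norm_le_pow_iff_mem_span_pow, _root_.zpow_neg,
      zpow_natCast, inv_eq_one_div, le_div_iff₀' (zero_lt_one.trans_le hp1)]
    rfl
  rw [integralToPGL2, MonoidHom.comp_apply, toPGL2_smul_vertex_eq_iff, hdet, hdvd]
  constructor
  · rintro ⟨c, hc, -, h10, -⟩
    rwa [(pow_eq_one_iff_of_nonneg (norm_nonneg _) two_ne_zero).1 hc.symm] at h10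
  · intro h10
    refine ⟨1, ?_⟩
    simp only [Units.val_one, norm_one, one_pow, mul_one]
    exact ⟨trivial, ⟨hle 0 0, (hle 0 1).trans hp1⟩, h10, hle 1 1⟩

/-- The principal congruence subgroup of level `pⁿ` in `GL₂(ℤ_p)`. -/
noncomputable def principalCongruenceSubgroup (p : ℕ) [Fact p.Prime] (n : ℕ) :
    Subgroup (GL (Fin 2) ℤ_[p]) :=
  (GeneralLinearGroup.map (PadicInt.toZModPow n)).ker

theorem continuous_toZModPow (n : ℕ) : Continuous (PadicInt.toZModPow (p := p) n) := by
  refine continuous_of_continuousAt_zero (PadicInt.toZModPow (p := p) n) ?_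
  rw [ContinuousAt, map_zero, nhds_discrete (ZMod (p ^ n)), tendsto_pure]
  have hpos : (0 : ℝ) < (p : ℝ) ^ (-(n : ℤ)) :=
    zpow_pos (Nat.cast_pos.2 (Fact.out : p.Prime).pos) _
  filter_upwards [Metric.closedBall_mem_nhds (0 : ℤ_[p]) hpos] with x hx
  rwa [mem_closedBall_zero_iff, PadicInt.norm_le_pow_iff_mem_span_pow, ← PadicInt.ker_toZModPow,
    RingHom.mem_ker] at hx

theorem isOpen_principalCongruenceSubgroup (n : ℕ) :
    IsOpen (principalCongruenceSubgroup p n : Set (GL (Fin 2) ℤ_[p])) := by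
  have hcont : Continuous fun U : GL (Fin 2) ℤ_[p] => U.val.map (PadicInt.toZModPow n) :=
    Units.continuous_val.matrix_map (continuous_toZModPow n)
  convert (isOpen_discrete {(1 : Matrix (Fin 2) (Fin 2) (ZMod (p ^ n)))}).preimage hcont using 1
  ext U
  exact Units.ext_iff

theorem isOpenMap_integralToPGL2 : IsOpenMap (integralToPGL2 p) := by
  have hentry : IsOpenMap (PadicInt.Coe.ringHom (p := p)) := PadicInt.isOpenEmbedding_coe.isOpenMap
  have hmatrix : IsOpenMap fun X : Matrix (Fin 2) (Fin 2) ℤ_[p] => X.map PadicInt.Coe.ringHom :=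
    .piMap (fun _ => .piMap (fun _ => hentry) (by simp)) (by simp)
  have hinj : Function.Injective
      fun X : Matrix (Fin 2) (Fin 2) ℤ_[p] => X.map PadicInt.Coe.ringHom :=
    Matrix.map_injective Subtype.val_injective
  exact QuotientGroup.isOpenMap_coe.comp (Units.isOpenMap_map hinj hmatrix)

theorem image_principalCongruenceSubgroup_mem_nhds_one (n : ℕ) :
    integralToPGL2 p '' principalCongruenceSubgroup p n ∈ 𝓝 1 :=
  (isOpenMap_integralToPGL2 _ (isOpen_principalCongruenceSubgroup n)).mem_nhds
    ⟨1, one_mem _, map_one _⟩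

-- Level `p ^ 2` rather than `p`: for `q = p`, the error term `p ^ 2 * s` must still be divisible
-- by `p * q` for the quotient `a / q` to be a unit.
theorem associated_natCast_of_toZModPow_eq {q : ℕ} (hq : q.Prime) {a : ℤ_[p]}
    (ha : PadicInt.toZModPow 2 a = q) : Associated a q := by
  have hdvd : (q : ℤ_[p]) ∣ p := by
    rcases eq_or_ne q p with rfl | hne
    · exact dvd_rfl
    · have hunit : IsUnit (q : ℤ_[p]) := by
        rw [PadicInt.isUnit_iff, PadicInt.norm_natCast_eq_one_iff]
        exact (Nat.coprime_primes Fact.out hq).2 hne.symm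
      exact hunit.dvd
  obtain ⟨r, hr⟩ := hdvd
  have hsub : a - q ∈ Ideal.span {(p : ℤ_[p]) ^ 2} := by
    rw [← PadicInt.ker_toZModPow, RingHom.mem_ker, map_sub, ha, map_natCast, sub_self]
  obtain ⟨s, hs⟩ := Ideal.mem_span_singleton.1 hsub
  have hunit : IsUnit (1 + (p : ℤ_[p]) * (r * s)) := by
    refine IsLocalRing.isUnit_of_mem_nonunits_one_sub_self _ ?_
    rw [sub_add_cancel_left, ← mul_neg]
    exact mul_mem_nonunits_left PadicInt.prime_p.not_isUnit
  have haq : a = q * (1 + p * (r * s)) := by linear_combination hs + p * s * hr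
  rw [haq]
  exact associated_mul_unit_left _ _ hunit

theorem associated_pow_apply_one_zero {U : GL (Fin 2) ℤ_[p]}
    (hU : U ∈ principalCongruenceSubgroup p 2) (k : ℕ) :
    Associated ((U ^ k) 1 0) (U 1 0 * k) := by
  induction k using Nat.recOnMul generalizing U with
  | zero => simp
  | one => simp
  | prime q hq =>
    obtain ⟨a, ha, hφa⟩ := exists_pow_apply_one_zero_eq_mul hU q
    rw [ha]
    exact (associated_natCast_of_toZModPow_eq hq hφa).mul_left _
  | mul k l hk hl =>
    rw [pow_mul, Nat.cast_mul, ← mul_assoc]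
    exact (hl (pow_mem hU k)).trans ((hk hU).mul_right _)

theorem period_integralToPGL2_vertex {U : GL (Fin 2) ℤ_[p]}
    (hU : U ∈ principalCongruenceSubgroup p 2) (hU10 : U 1 0 ≠ 0) {n : ℕ}
    (hn : (U 1 0).valuation ≤ n) :
    period (integralToPGL2 p U) (vertex p n) = p ^ (n - (U 1 0).valuation) := by
  refine Nat.dvd_right_iff_eq.1 fun k => ?_
  have hval : Associated ((p : ℤ_[p]) ^ (U 1 0).valuation) (U 1 0) :=
    ⟨PadicInt.unitCoeff hU10, by rw [mul_comm, ← PadicInt.unitCoeff_spec hU10]⟩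
  calc period (integralToPGL2 p U) (vertex p n) ∣ k
      ↔ (p : ℤ_[p]) ^ n ∣ (U ^ k) 1 0 := by
        rw [← pow_smul_eq_iff_period_dvd, ← map_pow, integralToPGL2_smul_vertex_eq_iff]
    _ ↔ (p : ℤ_[p]) ^ n ∣ (p : ℤ_[p]) ^ (U 1 0).valuation * k :=
        ((associated_pow_apply_one_zero hU k).trans (hval.symm.mul_right _)).dvd_iff_dvd_right
    _ ↔ (p : ℤ_[p]) ^ (n - (U 1 0).valuation) ∣ (k : ℤ_[p]) := by
        rw [← Nat.add_sub_cancel' hn, pow_add, Nat.add_sub_cancel_left]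
        exact mul_dvd_mul_iff_left (pow_ne_zero _ PadicInt.prime_p.ne_zero)
    _ ↔ p ^ (n - (U 1 0).valuation) ∣ k := by
        exact_mod_cast PadicInt.pow_p_dvd_int_iff (p := p) (n - (U 1 0).valuation) k

theorem eventually_smul_vertex_eq_of_smul_vertex_succ_eq {S : Set (PGL2 ℚ_[p])}
    (hS : IsCompact S) :
    ∀ᶠ n in atTop, ∀ g ∈ S, g • vertex p (n + 1) = vertex p (n + 1) →
      g • vertex p n = vertex p n := by
  have hp1 : (1 : ℝ) < p := by exact_mod_cast (Fact.out : p.Prime).one_lt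
  obtain ⟨C, hC⟩ := exists_norm_apply_sq_le_mul_norm_det hS 0 1
  have hlarge : ∀ᶠ n : ℕ in atTop, C ≤ ((p : ℝ) ^ n) ^ 2 :=
    ((tendsto_pow_atTop two_ne_zero).comp
      (tendsto_pow_atTop_atTop_of_one_lt hp1)).eventually_ge_atTop C
  filter_upwards [hlarge] with n hn g hg hfix
  obtain ⟨M, rfl⟩ := QuotientGroup.mk'_surjective _ g
  obtain ⟨c, hdet, ⟨h00, -⟩, h10, h11⟩ := toPGL2_smul_vertex_eq_iff.1 hfix
  refine toPGL2_smul_vertex_eq_iff.2 ⟨c, hdet, ⟨h00, ?_⟩, ?_, h11⟩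
  · refine le_of_sq_le_sq ?_ (by positivity)
    calc ‖M 0 1‖ ^ 2 ≤ C * ‖M.val.det‖ := hC M hg
      _ ≤ ((p : ℝ) ^ n) ^ 2 * ‖M.val.det‖ := by gcongr
      _ = (p ^ n * ‖(c : ℚ_[p])‖) ^ 2 := by rw [hdet, mul_pow]
  · refine le_trans ?_ h10
    gcongr
    · exact hp1.le
    · exact n.le_succ

end PadicVertices

/-- for `δ` in a compact subgroup of `PGL₂(ℚ_p)` no power of which is upper
triangular, the sequence `k_{pⁿ}(δ)/pⁿ` (where `k_{pⁿ}(δ)` is the minimal positive `k` with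
`δ^k ∈ a(pⁿ) K_p a(pⁿ)⁻¹`) takes only finitely many values and is eventually constant. -/
theorem stmt_5 (p : ℕ) [Fact p.Prime] (δ : PGL2 ℚ_[p])
    (hcompact : ∃ K : Subgroup (PGL2 ℚ_[p]), IsCompact (K : Set (PGL2 ℚ_[p])) ∧ δ ∈ K)
    (hnotUT : ∀ k : ℕ, 0 < k → ¬ ∃ M : GL (Fin 2) ℚ_[p],
      (M : Matrix (Fin 2) (Fin 2) ℚ_[p]) 1 0 = 0 ∧ toPGL2 ℚ_[p] M = δ ^ k)
    (f : ℕ → ℚ)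
    (hf : ∀ n : ℕ,
      f n = ((sInf {k : ℕ | 0 < k ∧ (aPGL p n)⁻¹ * δ ^ k * aPGL p n ∈ Kp p} : ℕ) : ℚ) / (p : ℚ) ^ n) :
    (Set.range f).Finite ∧ ∃ N : ℕ, ∀ m : ℕ, N ≤ m → f m = f N := by
  obtain ⟨K, hK, hδ⟩ := hcompact
  obtain ⟨m, hm, U, hU, hUδ⟩ :=
    exists_pow_mem_of_mem_nhds_one hK hδ (image_principalCongruenceSubgroup_mem_nhds_one 2)
  have hU10 : U 1 0 ≠ 0 := fun h0 => hnotUT m hm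
    ⟨GeneralLinearGroup.map PadicInt.Coe.ringHom U, by simp [h0], hUδ⟩
  have hfix := (eventually_smul_vertex_eq_of_smul_vertex_succ_eq hK).mono
    fun n hn k => hn (δ ^ k) (K.pow_mem hδ k)
  have hconst : EventuallyConst (fun n => (period δ (vertex p n) : ℚ) / (p : ℚ) ^ n) atTop :=
    eventuallyConst_period_div_pow hm (Fact.out : p.Prime).pos
      (fun n hn => hUδ ▸ period_integralToPGL2_vertex hU hU10 hn) hfix
  have hf_eq : f = fun n => (period δ (vertex p n) : ℚ) / (p : ℚ) ^ n := by
    ext n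
    simp only [hf, period_eq_sInf, vertex, smul_mk_eq_mk_iff]
  rw [← hf_eq] at hconst
  exact ⟨finite_range_of_eventuallyConst hconst, eventuallyConst_atTop.1 hconst⟩
end

section
/- For any real number x, the orbit of x under PGL₂(ℤ) acting by Möbius transformations equals the set of real numbers whose continued fraction expansion has the same tail as that of x. That is, PGL₂(ℤ)·x = {y ∈ ℝ : ∃ m, n > 0 such that a_{n+i}(y) = a_{m+i}(x) for all i ≥ 0}, where a_k denotes the k-th continued fraction digit. -/
/-- The Gauss map `y ↦ {1/y}`. -/
noncomputable def gaussMap : ℝ → ℝ := fun y => Int.fract y⁻¹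

/-- The `n`-th continued fraction digit (partial quotient) of `x`, for `n ≥ 1`:
`a_n(x) = ⌊ 1 / S^[n-1]({x}) ⌋`. -/
noncomputable def cfDigit (n : ℕ) (x : ℝ) : ℤ :=
  ⌊(gaussMap^[n - 1] (Int.fract x))⁻¹⌋

/-!
Let `c x = (fract x)⁻¹` be the shift `[a₀; a₁, a₂, …] ↦ [a₁; a₂, a₃, …]`, so that `cfDigit n x` is
`⌊cⁿ x⌋`. A continued fraction determines its value, hence two reals have a common tail of digits
exactly when their orbits under `c` meet. Every step of `c` is the Möbius transformation with
matrix `!![0, 1; 1, -⌊x⌋]`, so such reals lie in one orbit of `GL(2, ℤ)`. Conversely, `GL(2, ℤ)` is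
generated by `x ↦ -x⁻¹`, `x ↦ x + 1` and `x ↦ -x`, and each of these keeps `x` in its class, the
last one because `-[a₀; a₁, a₂, …] = [-a₀ - 1; 1, a₁ - 1, a₂, …]`.

On the projective line this is an equality of two equivalence relations, and the convention
`∞ ↦ 0`, which agrees with `0⁻¹ = 0`, makes it hold at rational points as well.
-/

section GrandOrbit

variable {α : Type*} {f : α → α} {r : Setoid α} {a b : α}

/-- The grand orbit relation of a self-map: two points are related when their forward orbits
meet. -/
def grandOrbit (f : α → α) : Setoid α where
  r a b := ∃ m n, f^[m] a = f^[n] b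
  iseqv :=
    { refl := fun _ => ⟨0, 0, rfl⟩
      symm := fun ⟨m, n, h⟩ => ⟨n, m, h.symm⟩
      trans := by
        rintro a b c ⟨m, n, hab⟩ ⟨k, l, hbc⟩
        refine ⟨k + m, n + l, ?_⟩
        rw [Function.iterate_add_apply, hab, ← Function.iterate_add_apply, Nat.add_comm k n,
          Function.iterate_add_apply, hbc, ← Function.iterate_add_apply] }

theorem grandOrbit_apply (f : α → α) (a : α) : grandOrbit f a (f a) :=
  ⟨1, 0, rfl⟩

theorem grandOrbit_of_apply_eq (h : f a = f b) : grandOrbit f a b :=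
  ⟨1, 1, h⟩

theorem grandOrbit_le (h : ∀ a, r a (f a)) : grandOrbit f ≤ r := by
  have h_iterate (n : ℕ) (a : α) : r a (f^[n] a) := by
    induction n with
    | zero => exact r.refl a
    | succ n ih =>
      rw [Function.iterate_succ_apply']
      exact r.trans ih (h _)
  rintro a b ⟨m, n, hab⟩
  exact r.trans (hab ▸ h_iterate m a) (r.symm (h_iterate n b))

theorem orbitRel_le_of_closure_eq_top {G : Type*} [Group G] [MulAction G α] {s : Set G}
    (hs : Subgroup.closure s = ⊤) (h : ∀ g ∈ s, ∀ a, r a (g • a)) :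
    MulAction.orbitRel G α ≤ r := by
  have h_smul (g : G) : ∀ a, r a (g • a) := by
    induction (hs ▸ Subgroup.mem_top g : g ∈ Subgroup.closure s) using
      Subgroup.closure_induction with
    | mem g hg => exact h g hg
    | one => exact fun a => (one_smul G a).symm ▸ r.refl a
    | mul g g' _ _ hg hg' => exact fun a => mul_smul g g' a ▸ r.trans (hg' a) (hg _)
    | inv g _ hg => exact fun a => r.symm (by simpa using hg (g⁻¹ • a))
  rintro _ a ⟨g, rfl⟩
  exact r.symm (h_smul g a)

end GrandOrbit

section Shift

variable {K : Type*} [Field K] [LinearOrder K] [FloorRing K]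

/-- The shift `[a₀; a₁, a₂, …] ↦ [a₁; a₂, a₃, …]` of continued fractions, sending integers
to `0⁻¹ = 0`. -/
def cfShift (x : K) : K := (Int.fract x)⁻¹

variable [IsStrictOrderedRing K] {x y : K}

theorem floor_cfShift_eq_zero_iff : ⌊cfShift x⌋ = 0 ↔ Int.fract x = 0 := by
  refine ⟨fun h => ?_, fun h => by simp [cfShift, h]⟩
  by_contra hx
  have h_pos : 0 < Int.fract x := (Int.fract_nonneg x).lt_of_ne' hx
  exact (Int.floor_eq_zero_iff.1 h).2.not_gt ((one_lt_inv₀ h_pos).2 (Int.fract_lt_one x))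

theorem of_s_get?_eq_ite (x : K) (n : ℕ) :
    (GenContFract.of x).s.get? n =
      if ⌊cfShift^[n + 1] x⌋ = 0 then none else some ⟨1, ⌊cfShift^[n + 1] x⌋⟩ := by
  induction n generalizing x with
  | zero =>
    rw [zero_add, Function.iterate_one]
    split_ifs with h <;> rw [floor_cfShift_eq_zero_iff] at h
    · rw [← Int.floor_add_fract x, h, add_zero, GenContFract.of_s_of_int, Stream'.Seq.get?_nil]
    · exact GenContFract.of_s_head h
  | succ n ih => exact (GenContFract.of_s_succ x n).trans (ih (cfShift x))

theorem injective_genContFract_of : Function.Injective (GenContFract.of : K → GenContFract K) := by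
  intro x y h
  let := Preorder.topology K
  have : OrderTopology K := ⟨rfl⟩
  have := FloorRing.archimedean K
  exact tendsto_nhds_unique (GenContFract.of_convergence x) (h ▸ GenContFract.of_convergence y)

theorem eq_of_floor_iterate_cfShift_eq (h : ∀ n, ⌊cfShift^[n] x⌋ = ⌊cfShift^[n] y⌋) : x = y := by
  apply injective_genContFract_of
  ext1
  · rw [GenContFract.of_h_eq_floor, GenContFract.of_h_eq_floor]
    exact congrArg Int.cast (h 0)
  · ext1 n
    rw [of_s_get?_eq_ite, of_s_get?_eq_ite, h]

theorem cfShift_of_mem_Ico (hx : x ∈ Set.Ico 0 1) : cfShift x = x⁻¹ := by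
  rw [cfShift, Int.fract_eq_self.2 hx]

theorem cfShift_cfShift_neg (h_pos : 0 < Int.fract x) (h_lt : Int.fract x < 1 / 2) :
    cfShift (cfShift (-x)) = cfShift x - 1 := by
  have h_pos' : 0 < 1 - Int.fract x := by linarith
  have h_neg : cfShift (-x) = Int.fract x / (1 - Int.fract x) + 1 := by
    rw [cfShift, Int.fract_neg h_pos.ne']
    field_simp
    ring
  have h_mem : Int.fract x / (1 - Int.fract x) ∈ Set.Ico 0 1 :=
    ⟨by positivity, by rw [div_lt_one h_pos']; linarith⟩
  rw [h_neg, cfShift, Int.fract_add_one, Int.fract_eq_self.2 h_mem, cfShift]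
  field_simp

theorem grandOrbit_cfShift_add_one (x : K) : grandOrbit cfShift x (x + 1) :=
  grandOrbit_of_apply_eq <| by rw [cfShift, cfShift, Int.fract_add_one]

theorem grandOrbit_cfShift_neg (x : K) : grandOrbit cfShift x (-x) := by
  have of_fract_lt {y : K} (h_pos : 0 < Int.fract y) (h_lt : Int.fract y < 1 / 2) :
      grandOrbit cfShift y (-y) := by
    have h_shift : grandOrbit cfShift (cfShift y) (cfShift (cfShift (-y))) := by
      rw [cfShift_cfShift_neg h_pos h_lt]
      simpa using Setoid.symm' _ (grandOrbit_cfShift_add_one (cfShift y - 1))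
    obtain ⟨m, n, h⟩ := h_shift
    exact ⟨m + 1, n + 2, h⟩
  rcases (Int.fract_nonneg x).eq_or_lt' with h_zero | h_pos
  · exact grandOrbit_of_apply_eq (by simp [cfShift, h_zero, Int.fract_neg_eq_zero.2 h_zero])
  have h_neg : Int.fract (-x) = 1 - Int.fract x := Int.fract_neg h_pos.ne'
  rcases lt_trichotomy (Int.fract x) (1 / 2) with h_lt | h_half | h_gt
  · exact of_fract_lt h_pos h_lt
  · exact grandOrbit_of_apply_eq (by rw [cfShift, cfShift, h_neg, h_half]; norm_num)
  · have h_lt_one := Int.fract_lt_one x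
    simpa using Setoid.symm' _ (of_fract_lt (y := -x) (by linarith) (by linarith))

theorem grandOrbit_cfShift_inv (x : K) : grandOrbit cfShift x x⁻¹ := by
  have of_mem_Ico {y : K} (hy : y ∈ Set.Ico 0 1) : grandOrbit cfShift y y⁻¹ :=
    cfShift_of_mem_Ico hy ▸ grandOrbit_apply cfShift y
  have of_nonneg {y : K} (hy : 0 ≤ y) : grandOrbit cfShift y y⁻¹ := by
    rcases lt_trichotomy y 1 with h_lt | rfl | h_gt
    · exact of_mem_Ico ⟨hy, h_lt⟩
    · rw [inv_one]
    · simpa using Setoid.symm' _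
        (of_mem_Ico ⟨inv_nonneg.2 hy, inv_lt_one_of_one_lt₀ h_gt⟩)
  rcases le_total 0 x with hx | hx
  · exact of_nonneg hx
  · have h_neg_inv : grandOrbit cfShift (-x) (-x⁻¹) := by
      simpa using of_nonneg (neg_nonneg.2 hx)
    exact Setoid.trans' _ (grandOrbit_cfShift_neg x)
      (Setoid.trans' _ h_neg_inv (Setoid.symm' _ (grandOrbit_cfShift_neg x⁻¹)))

end Shift

section Generators

open Matrix Matrix.SpecialLinearGroup
open scoped MatrixGroups

/-- The matrix of `x ↦ -x`, which together with `SL(2, ℤ)` generates `GL(2, ℤ)`. -/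
def reflection : GL (Fin 2) ℤ :=
  ⟨!![-1, 0; 0, 1], !![-1, 0; 0, 1], by decide, by decide⟩

theorem det_val_eq_one_or_neg_one (g : GL (Fin 2) ℤ) : g.val.det = 1 ∨ g.val.det = -1 :=
  Int.isUnit_iff.1 ((Matrix.isUnit_iff_isUnit_det _).1 g.isUnit)

theorem closure_S_T_reflection_eq_top :
    Subgroup.closure {toGL ModularGroup.S, toGL ModularGroup.T, reflection} = ⊤ := by
  set H := Subgroup.closure {toGL ModularGroup.S, toGL ModularGroup.T, reflection}
  have toGL_mem (s : SL(2, ℤ)) : toGL s ∈ H := by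
    have h_le : Subgroup.closure {ModularGroup.S, ModularGroup.T} ≤ H.comap toGL := by
      rw [Subgroup.closure_le]
      rintro _ (rfl | rfl) <;> exact Subgroup.subset_closure (by simp)
    rw [SpecialLinearGroup.SL2Z_generators] at h_le
    exact h_le (Subgroup.mem_top s)
  have mem_of_det_eq_one {g : GL (Fin 2) ℤ} (hg : g.val.det = 1) : g ∈ H := by
    have h_toGL : toGL ⟨g.val, hg⟩ = g := Units.ext rfl
    exact h_toGL ▸ toGL_mem _
  refine (Subgroup.eq_top_iff' H).2 fun g => ?_
  rcases det_val_eq_one_or_neg_one g with hg | hg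
  · exact mem_of_det_eq_one hg
  · have h_mem : reflection ∈ H := Subgroup.subset_closure (by simp)
    refine (H.mul_mem_cancel_left h_mem).1 (mem_of_det_eq_one ?_)
    have h_det : reflection.val.det = -1 := by simp [reflection]
    rw [Units.val_mul, det_mul, h_det, hg, neg_one_mul, neg_neg]

end Generators

section ProjectiveLine

open Matrix OnePoint
open scoped MatrixGroups

/-- The value of a point of the projective line, with `∞ ↦ 0` in agreement with `a / 0 = 0`. -/
def finitePart {K : Type*} [Zero K] (p : OnePoint K) : K := p.elim 0 id

section Field

variable {K : Type*} [Field K] [DecidableEq K]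

theorem finitePart_smul_coe (g : GL (Fin 2) K) (x : K) :
    finitePart (g • (x : OnePoint K)) = (g 0 0 * x + g 0 1) / (g 1 0 * x + g 1 1) := by
  rw [smul_some_eq_ite]
  split_ifs with h <;> simp [finitePart, h]

theorem finitePart_smul_infty (g : GL (Fin 2) K) :
    finitePart (g • (∞ : OnePoint K)) = g 0 0 / g 1 0 := by
  rw [smul_infty_eq_ite]
  split_ifs with h <;> simp [finitePart, h]

/-- The action of `GL(2, ℤ)` on the projective line over `K` by Möbius transformations. Scalar
matrices act trivially, so its orbits are those of `PGL(2, ℤ)`. -/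
noncomputable instance : MulAction (GL (Fin 2) ℤ) (OnePoint K) :=
  MulAction.compHom _ (GeneralLinearGroup.map (Int.castRingHom K))

theorem finitePart_intGL_smul_coe (g : GL (Fin 2) ℤ) (x : K) :
    finitePart (g • (x : OnePoint K)) = (g 0 0 * x + g 0 1) / (g 1 0 * x + g 1 1) :=
  finitePart_smul_coe (GeneralLinearGroup.map (Int.castRingHom K) g) x

theorem finitePart_intGL_smul_infty (g : GL (Fin 2) ℤ) :
    finitePart (g • (∞ : OnePoint K)) = g 0 0 / g 1 0 :=
  finitePart_smul_infty (GeneralLinearGroup.map (Int.castRingHom K) g)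

theorem orbitRel_coe_finitePart (p : OnePoint K) :
    MulAction.orbitRel (GL (Fin 2) ℤ) (OnePoint K) (finitePart p : K) p := by
  cases p with
  | infty =>
    refine ⟨SpecialLinearGroup.toGL ModularGroup.S, ?_⟩
    refine (smul_infty_eq_ite (GeneralLinearGroup.map (Int.castRingHom K) _)).trans ?_
    simp [finitePart, ModularGroup.coe_S]
  | coe x => exact Setoid.refl' _ _

theorem orbitRel_coe_iff {x y : K} :
    MulAction.orbitRel (GL (Fin 2) ℤ) (OnePoint K) y x ↔
      ∃ M : Matrix (Fin 2) (Fin 2) ℤ, (M.det = 1 ∨ M.det = -1) ∧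
        y = (M 0 0 * x + M 0 1) / (M 1 0 * x + M 1 1) := by
  constructor
  · rintro ⟨g, hg⟩
    exact ⟨g.val, det_val_eq_one_or_neg_one g,
      (congrArg finitePart hg).symm.trans (finitePart_intGL_smul_coe g x)⟩
  · rintro ⟨M, hM, rfl⟩
    let g : GL (Fin 2) ℤ := GeneralLinearGroup.mk'' M (Int.isUnit_iff.2 hM)
    rw [show M = g.val from rfl, ← finitePart_intGL_smul_coe]
    exact Setoid.trans' _ (orbitRel_coe_finitePart _) ⟨g, rfl⟩

end Field

variable {K : Type*} [Field K] [LinearOrder K] [FloorRing K]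

theorem orbitRel_coe_cfShift (x : K) :
    MulAction.orbitRel (GL (Fin 2) ℤ) (OnePoint K) (cfShift x : K) x :=
  orbitRel_coe_iff.2 ⟨!![0, 1; 1, -⌊x⌋], by simp, by simp [cfShift, Int.fract, sub_eq_add_neg]⟩

theorem comap_grandOrbit_cfShift_le_orbitRel :
    (grandOrbit cfShift).comap finitePart ≤ MulAction.orbitRel (GL (Fin 2) ℤ) (OnePoint K) := by
  intro p q hpq
  have h_le : grandOrbit cfShift ≤
      (MulAction.orbitRel (GL (Fin 2) ℤ) (OnePoint K)).comap ((↑) : K → OnePoint K) :=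
    grandOrbit_le fun x => Setoid.symm' _ (orbitRel_coe_cfShift x)
  exact Setoid.trans' _ (Setoid.symm' _ (orbitRel_coe_finitePart p))
    (Setoid.trans' _ (h_le hpq) (orbitRel_coe_finitePart q))

theorem orbitRel_le_comap_grandOrbit_cfShift [IsStrictOrderedRing K] :
    MulAction.orbitRel (GL (Fin 2) ℤ) (OnePoint K) ≤ (grandOrbit cfShift).comap finitePart := by
  refine orbitRel_le_of_closure_eq_top closure_S_T_reflection_eq_top fun g hg p => ?_
  rw [Setoid.comap_rel]
  cases p with
  | infty =>
    have h_zero : finitePart (g • (∞ : OnePoint K)) = 0 := by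
      rw [finitePart_intGL_smul_infty]
      rcases hg with rfl | rfl | rfl <;> simp [ModularGroup.coe_S, ModularGroup.coe_T, reflection]
    exact h_zero ▸ Setoid.refl' _ 0
  | coe x =>
    rw [finitePart_intGL_smul_coe]
    rcases hg with rfl | rfl | rfl
    · have h_neg_inv := Setoid.trans' _ (grandOrbit_cfShift_inv x) (grandOrbit_cfShift_neg x⁻¹)
      simpa [finitePart, ModularGroup.coe_S, neg_div] using h_neg_inv
    · simpa [finitePart, ModularGroup.coe_T] using grandOrbit_cfShift_add_one x
    · simpa [finitePart, reflection] using grandOrbit_cfShift_neg x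

theorem orbitRel_eq_comap_grandOrbit_cfShift [IsStrictOrderedRing K] :
    MulAction.orbitRel (GL (Fin 2) ℤ) (OnePoint K) = (grandOrbit cfShift).comap finitePart :=
  le_antisymm orbitRel_le_comap_grandOrbit_cfShift comap_grandOrbit_cfShift_le_orbitRel

end ProjectiveLine

theorem cfDigit_eq_floor_iterate_cfShift {n : ℕ} (hn : 0 < n) (x : ℝ) :
    cfDigit n x = ⌊cfShift^[n] x⌋ := by
  obtain ⟨n, rfl⟩ := Nat.exists_eq_add_one.2 hn
  have h_semiconj : Function.Semiconj Int.fract cfShift gaussMap := fun _ => rfl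
  rw [cfDigit, Nat.add_sub_cancel, ← h_semiconj.iterate_right n, Function.iterate_succ_apply',
    cfShift]

theorem grandOrbit_cfShift_iff_cfDigit {x y : ℝ} :
    grandOrbit cfShift y x ↔
      ∃ m n : ℕ, 0 < m ∧ 0 < n ∧ ∀ i : ℕ, cfDigit (n + i) y = cfDigit (m + i) x := by
  constructor
  · rintro ⟨n, m, h⟩
    refine ⟨m + 1, n + 1, m.succ_pos, n.succ_pos, fun i => ?_⟩
    rw [cfDigit_eq_floor_iterate_cfShift (by positivity),
      cfDigit_eq_floor_iterate_cfShift (by positivity), show n + 1 + i = i + 1 + n by lia,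
      show m + 1 + i = i + 1 + m by lia, Function.iterate_add_apply, h,
      ← Function.iterate_add_apply]
  · rintro ⟨m, n, hm, hn, h⟩
    refine ⟨n, m, eq_of_floor_iterate_cfShift_eq fun i => ?_⟩
    rw [← Function.iterate_add_apply, ← Function.iterate_add_apply, Nat.add_comm i,
      Nat.add_comm i, ← cfDigit_eq_floor_iterate_cfShift (by positivity),
      ← cfDigit_eq_floor_iterate_cfShift (by positivity), h]

/-- For rational `x` the digits past the end of the expansion are `⌊0⁻¹⌋ = 0`, and a vanishing
denominator gives `y = 0`, which does lie in the orbit of every rational number. -/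
theorem stmt_11_general (x : ℝ) :
    {y : ℝ | ∃ M : Matrix (Fin 2) (Fin 2) ℤ, (M.det = 1 ∨ M.det = -1) ∧
      y = ((M 0 0 : ℝ) * x + (M 0 1 : ℝ)) / ((M 1 0 : ℝ) * x + (M 1 1 : ℝ))}
    = {y : ℝ | ∃ m n : ℕ, 0 < m ∧ 0 < n ∧
      ∀ i : ℕ, cfDigit (n + i) y = cfDigit (m + i) x} := by
  ext y
  rw [Set.mem_ofPred_eq, Set.mem_ofPred_eq, ← orbitRel_coe_iff, ← grandOrbit_cfShift_iff_cfDigit,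
    orbitRel_eq_comap_grandOrbit_cfShift]
  rfl

/-- for an irrational real `x`, the orbit of `x` under `PGL₂(ℤ)` acting by
Möbius transformations is exactly the set of reals whose continued fraction expansion has the
same tail as that of `x`. -/
theorem stmt_11 (x : ℝ) (hx : Irrational x) :
    {y : ℝ | ∃ M : Matrix (Fin 2) (Fin 2) ℤ, (M.det = 1 ∨ M.det = -1) ∧
      y = ((M 0 0 : ℝ) * x + (M 0 1 : ℝ)) / ((M 1 0 : ℝ) * x + (M 1 1 : ℝ))}
    = {y : ℝ | ∃ m n : ℕ, 0 < m ∧ 0 < n ∧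
      ∀ i : ℕ, cfDigit (n + i) y = cfDigit (m + i) x} :=
  stmt_11_general x
end
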